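/- Let (A,Λ) be any associative form ring, let (I,Γ) and (J,Δ) be two form ideals of (A,Λ), and let n ≥ 3. Then the stability map [FU(2n,I,Γ), FU(2n,J,Δ)]/EU(2n,(I,Γ)∘(J,Δ)) → [FU(2(n+1),I,Γ), FU(2(n+1),J,Δ)]/EU(2(n+1),(I,Γ)∘(J,Δ)), induced by the standard embedding of 2n×2n matrices into 2(n+1)×2(n+1) matrices (which sends each elementary unitary transvection T_ij(c) of degree 2n to the transvection with the same indices and parameter of degree 2(n+1)), is surjective. -/

import Mathlib

open Matrix
open scoped commutatorElement

/-- Bak's form ring data on a ring `A`: an involution `bar`, a central symmetry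
`λ` with `λ λ̄ = 1`, and a form parameter `Λ`. -/
structure FormRingData (A : Type*) [Ring A] where
  bar : A →+ A
  bar_mul : ∀ a b : A, bar (a * b) = bar b * bar a
  bar_bar : ∀ a : A, bar (bar a) = a
  lam : A
  lam_comm : ∀ a : A, lam * a = a * lam
  lam_bar : lam * bar lam = 1
  Lambda : AddSubgroup A
  lambdaMin_mem : ∀ c : A, c - lam * bar c ∈ Lambda
  lambdaMax_mem : ∀ x ∈ Lambda, x = -(lam * bar x)
  lambda_conj : ∀ (c : A), ∀ x ∈ Lambda, c * x * bar c ∈ Lambda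

namespace FormRingData

variable {A : Type*} [Ring A]

/-- Integral powers of the symmetry `λ`; negative powers use `λ̄ = λ⁻¹`. -/
def lpow (D : FormRingData A) (k : ℤ) : A :=
  if 0 ≤ k then D.lam ^ k.toNat else (D.bar D.lam) ^ (-k).toNat

end FormRingData

/-- The index set `Ω = {1,…,n,−n,…,−1}`, coded as `Fin n × Bool`
(second component `true` = positive index). -/
abbrev Idx (n : ℕ) := Fin n × Bool

namespace Idx

/-- The involution `i ↦ −i` on indices. -/
def neg {n : ℕ} (i : Idx n) : Idx n := (i.1, !i.2)

/-- The sign `ε(i) ∈ {±1}`. -/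
def eps {n : ℕ} (i : Idx n) : ℤ := if i.2 then 1 else -1

theorem neg_ne {n : ℕ} (i : Idx n) : neg i ≠ i := by
  simp [neg, Prod.ext_iff]

theorem neg_injective {n : ℕ} : Function.Injective (neg (n := n)) := by
  intro i j h
  simp only [neg, Prod.mk.injEq] at h
  refine Prod.ext h.1 ?_
  have h2 := h.2
  cases hi : i.2 <;> cases hj : j.2 <;> simp_all

theorem neg_neg {n : ℕ} (i : Idx n) : neg (neg i) = i := by
  simp [neg]

end Idx

/-- `GL(2n, A)`, realised as the units of the `Ω × Ω` matrix ring over `A`. -/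
abbrev GLn (A : Type*) [Ring A] (n : ℕ) := (Matrix (Idx n) (Idx n) A)ˣ

section aux

theorem one_add_mul_one_sub {R : Type*} [Ring R] {X : R} (h : X * X = 0) :
    (1 + X) * (1 - X) = 1 := by
  have hh : (1 + X) * (1 - X) = 1 - X * X := by noncomm_ring
  rw [hh, h, sub_zero]

theorem one_sub_mul_one_add {R : Type*} [Ring R] {X : R} (h : X * X = 0) :
    (1 - X) * (1 + X) = 1 := by
  have hh : (1 - X) * (1 + X) = 1 - X * X := by noncomm_ring
  rw [hh, h, sub_zero]

theorem stdBasisMatrix_neg' {A : Type*} [Ring A] {n : ℕ} (i j : Idx n) (c : A) :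
    Matrix.single i j (-c) = -Matrix.single i j c := by
  refine eq_neg_of_add_eq_zero_left ?_
  rw [← Matrix.single_add]
  simp

end aux

namespace FormRingData

variable {A : Type*} [Ring A] {n : ℕ}

/-- The off-diagonal part of a short root element. -/
def Xmat (D : FormRingData A) (i j : Idx n) (c : A) : Matrix (Idx n) (Idx n) A :=
  Matrix.single i j c -
    Matrix.single (Idx.neg j) (Idx.neg i) (D.lpow ((Idx.eps j - Idx.eps i) / 2) * D.bar c)

theorem Xmat_mul (D : FormRingData A) {i j : Idx n} (hij : i ≠ j) (c c' : A) :
    D.Xmat i j c * D.Xmat i j c' = 0 := by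
  unfold Xmat
  rw [sub_mul, mul_sub, mul_sub,
    Matrix.single_mul_single_of_ne _ _ _ _ (Ne.symm hij),
    Matrix.single_mul_single_of_ne _ _ _ _ (Ne.symm (Idx.neg_ne j)),
    Matrix.single_mul_single_of_ne _ _ _ _ (Idx.neg_ne i),
    Matrix.single_mul_single_of_ne _ _ _ _ (fun h => hij (Idx.neg_injective h))]
  simp

theorem Xmat_neg (D : FormRingData A) (i j : Idx n) (c : A) :
    D.Xmat i j (-c) = -D.Xmat i j c := by
  unfold Xmat
  rw [map_neg, mul_neg, stdBasisMatrix_neg', stdBasisMatrix_neg']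
  abel

/-- The elementary short root unipotent `T_{ij}(c)`, for `i ≠ ±j`
(with junk value `1` when `i = j`). -/
def TS (D : FormRingData A) (i j : Idx n) (c : A) : GLn A n :=
  if h : i = j then 1 else
    { val := 1 + D.Xmat i j c
      inv := 1 + D.Xmat i j (-c)
      val_inv := by
        rw [D.Xmat_neg, ← sub_eq_add_neg]
        exact one_add_mul_one_sub (D.Xmat_mul h c c)
      inv_val := by
        rw [D.Xmat_neg, ← sub_eq_add_neg]
        exact one_sub_mul_one_add (D.Xmat_mul h c c) }

/-- The elementary long root unipotent `T_{i,−i}(c)`. -/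
def TL (D : FormRingData A) (i : Idx n) (c : A) : GLn A n where
  val := 1 + Matrix.single i (Idx.neg i) c
  inv := 1 + Matrix.single i (Idx.neg i) (-c)
  val_inv := by
    rw [stdBasisMatrix_neg', ← sub_eq_add_neg]
    exact one_add_mul_one_sub (Matrix.single_mul_single_of_ne _ _ _ _ (Idx.neg_ne i) _)
  inv_val := by
    rw [stdBasisMatrix_neg', ← sub_eq_add_neg]
    exact one_sub_mul_one_add (Matrix.single_mul_single_of_ne _ _ _ _ (Idx.neg_ne i) _)

/-- The elementary unitary transvection `T_{ij}(c)` (long or short root type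
according to whether `j = −i`). -/
def T (D : FormRingData A) (i j : Idx n) (c : A) : GLn A n :=
  if j = Idx.neg i then D.TL i c else D.TS i j c

/-- The elementary commutator `Y_{ij}(a,b) = [T_{ij}(a), T_{ji}(b)]`. -/
def Y (D : FormRingData A) (i j : Idx n) (a b : A) : GLn A n :=
  ⁅D.T i j a, D.T j i b⁆

/-- The elementary conjugate `Z_{ij}(a,c) = T_{ji}(c) T_{ij}(a) T_{ji}(−c)`. -/
def Z (D : FormRingData A) (i j : Idx n) (a c : A) : GLn A n :=
  D.T j i c * D.T i j a * D.T j i (-c)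

/-- The set of elementary unitary transvections of level `(I,Γ)`. -/
def transvGen (D : FormRingData A) (n : ℕ) (I Γ : AddSubgroup A) : Set (GLn A n) :=
  {x | ∃ i j : Idx n, i ≠ j ∧ i ≠ Idx.neg j ∧ ∃ c ∈ I, x = D.TS i j c} ∪
    {x | ∃ i : Idx n, ∃ g ∈ Γ, x = D.TL i (D.lpow (-(Idx.eps i + 1) / 2) * g)}

/-- The unrelative elementary subgroup `FU(2n, I, Γ)`. -/
def FU (D : FormRingData A) (n : ℕ) (I Γ : AddSubgroup A) : Subgroup (GLn A n) :=
  Subgroup.closure (D.transvGen n I Γ)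

/-- The absolute elementary unitary group `EU(2n, A, Λ)`. -/
def EUmax (D : FormRingData A) (n : ℕ) : Subgroup (GLn A n) :=
  D.FU n ⊤ D.Lambda

/-- The relative elementary subgroup `EU(2n, I, Γ)`: the normal closure of
`FU(2n, I, Γ)` in `EU(2n, A, Λ)`. -/
def EU (D : FormRingData A) (n : ℕ) (I Γ : AddSubgroup A) : Subgroup (GLn A n) :=
  Subgroup.closure {x | ∃ g ∈ D.EUmax n, ∃ t ∈ D.transvGen n I Γ, x = g * t * g⁻¹}

/-- The additive subgroup generated by products `st`, `s ∈ S`, `t ∈ T`. -/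
def mulSub (S T : AddSubgroup A) : AddSubgroup A :=
  AddSubgroup.closure {x | ∃ a ∈ S, ∃ b ∈ T, x = a * b}

/-- The symmetrised product `ST + TS` of two (additive subgroups underlying)
two-sided ideals. -/
def symI (S T : AddSubgroup A) : AddSubgroup A :=
  mulSub S T ⊔ mulSub T S

/-- The minimal relative form parameter `Γ_min(K)` of level `K`. -/
def gammaMin (D : FormRingData A) (K : AddSubgroup A) : AddSubgroup A :=
  AddSubgroup.closure
    ({x | ∃ a ∈ K, x = a - D.lam * D.bar a} ∪
      {x | ∃ a ∈ K, ∃ c ∈ D.Lambda, x = a * c * D.bar a})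

/-- The relative form parameter `ˢΓ = ⟨ b γ b̄ ∣ b ∈ S, γ ∈ Γ ⟩`. -/
def conjPar (D : FormRingData A) (S Γ : AddSubgroup A) : AddSubgroup A :=
  AddSubgroup.closure {x | ∃ b ∈ S, ∃ g ∈ Γ, x = b * g * D.bar b}

/-- The relative form parameter of the symmetrised product
`(I,Γ)∘(J,Δ) = (IJ+JI, Γ_min(IJ+JI) + ᴶΓ + ᴵΔ)`. -/
def symG (D : FormRingData A) (I Γ J Δ : AddSubgroup A) : AddSubgroup A :=
  D.gammaMin (symI I J) ⊔ D.conjPar J Γ ⊔ D.conjPar I Δ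

/-- The elementary subgroup `EU(2n, (I,Γ)∘(J,Δ))` of the symmetrised product. -/
def EUsym (D : FormRingData A) (n : ℕ) (I Γ J Δ : AddSubgroup A) : Subgroup (GLn A n) :=
  D.EU n (symI I J) (D.symG I Γ J Δ)

/-- Position-dependent membership `a ∈ (I,Γ)` at position `(i,j)`:
`a ∈ I` for a short root position, `a ∈ λ^{−(ε(i)+1)/2}Γ` for a long one. -/
def pmem (D : FormRingData A) (I Γ : AddSubgroup A) {n : ℕ} (i j : Idx n) (a : A) : Prop :=
  if j = Idx.neg i then ∃ g ∈ Γ, a = D.lpow (-(Idx.eps i + 1) / 2) * g else a ∈ I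

end FormRingData

/-- A form ideal `(I,Γ)` of the form ring `(A,Λ)`. -/
structure FormIdeal {A : Type*} [Ring A] (D : FormRingData A) where
  I : AddSubgroup A
  Gamma : AddSubgroup A
  mul_mem_left : ∀ (c : A), ∀ x ∈ I, c * x ∈ I
  mul_mem_right : ∀ (c : A), ∀ x ∈ I, x * c ∈ I
  bar_mem : ∀ x ∈ I, D.bar x ∈ I
  gammaMin_le : D.gammaMin I ≤ Gamma
  gamma_le_I : Gamma ≤ I
  gamma_le_Lambda : Gamma ≤ D.Lambda
  gamma_conj : ∀ (c : A), ∀ x ∈ Gamma, c * x * D.bar c ∈ Gamma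

/-- `Fin 1 × Bool ≃ Bool`. -/
def finBoolEquiv : Fin 1 × Bool ≃ Bool where
  toFun p := p.2
  invFun b := (0, b)
  left_inv p := by
    obtain ⟨i, b⟩ := p
    have hi : (0 : Fin 1) = i := Subsingleton.elim _ _
    simp [← hi]
  right_inv b := rfl

/-- The standard identification `Ω_n ⊔ {±(n+1)} ≃ Ω_{n+1}`. -/
def idxSumEquiv (n : ℕ) : Idx n ⊕ Bool ≃ Idx (n + 1) :=
  ((Equiv.refl (Idx n)).sumCongr finBoolEquiv.symm).trans <|
    ((Equiv.sumProdDistrib (Fin n) (Fin 1) Bool).symm).trans <|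
      finSumFinEquiv.prodCongr (Equiv.refl Bool)

/-- The standard embedding of `2n × 2n` matrices into `2(n+1) × 2(n+1)`
matrices (direct sum with the identity block). -/
def embMat {A : Type*} [Ring A] (n : ℕ) (M : Matrix (Idx n) (Idx n) A) :
    Matrix (Idx (n + 1)) (Idx (n + 1)) A :=
  (Matrix.fromBlocks M 0 0 (1 : Matrix Bool Bool A)).submatrix
    (idxSumEquiv n).symm (idxSumEquiv n).symm

theorem embMat_one {A : Type*} [Ring A] (n : ℕ) :
    embMat n (1 : Matrix (Idx n) (Idx n) A) = 1 := by
  simp [embMat, Matrix.fromBlocks_one, Matrix.submatrix_one_equiv]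

theorem embMat_mul {A : Type*} [Ring A] (n : ℕ) (M N : Matrix (Idx n) (Idx n) A) :
    embMat n (M * N) = embMat n M * embMat n N := by
  unfold embMat
  rw [Matrix.submatrix_mul_equiv _ _ _ (idxSumEquiv n).symm _,
    Matrix.fromBlocks_multiply]
  simp

/-- The standard embedding as a multiplicative map. -/
def embHom (A : Type*) [Ring A] (n : ℕ) :
    Matrix (Idx n) (Idx n) A →* Matrix (Idx (n + 1)) (Idx (n + 1)) A where
  toFun := embMat n
  map_one' := embMat_one n
  map_mul' := embMat_mul n

/-- The standard stability embedding `GL(2n,A) → GL(2(n+1),A)`, sending each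
elementary unitary transvection of degree `2n` to the transvection with the
same indices and parameter of degree `2(n+1)`. -/
def embGL (A : Type*) [Ring A] (n : ℕ) : GLn A n →* GLn A (n + 1) :=
  Units.map (embHom A n)

set_option linter.unusedSimpArgs false
set_option linter.unusedVariables false

namespace FormRingData

variable {A : Type*} [Ring A] (D : FormRingData A)

theorem bar_one' : D.bar 1 = 1 := by
  have h := D.bar_mul (D.bar 1) 1
  rw [mul_one, D.bar_bar, mul_one] at h
  exact h.symm

theorem bar_lam_mul : D.bar D.lam * D.lam = 1 := by
  rw [← D.lam_comm]; exact D.lam_bar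

theorem blam_comm (a : A) : D.bar D.lam * a = a * D.bar D.lam := by
  have := congrArg D.bar (D.lam_comm (D.bar a))
  rw [D.bar_mul, D.bar_mul, D.bar_bar] at this
  exact this.symm

/-- The factor `λ^{-(ε(i)+1)/2}`. -/
def kap {n : ℕ} (i : Idx n) : A := D.lpow (-(Idx.eps i + 1) / 2)

theorem kap_eq {n : ℕ} (i : Idx n) : D.kap i = if i.2 then D.bar D.lam else 1 := by
  rcases i with ⟨p, _ | _⟩ <;> simp [kap, lpow, Idx.eps]

theorem kap_comm {n : ℕ} (i : Idx n) (a : A) : D.kap i * a = a * D.kap i := by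
  rw [kap_eq]; split_ifs
  · exact D.blam_comm a
  · simp

theorem bkap_comm {n : ℕ} (i : Idx n) (a : A) : D.bar (D.kap i) * a = a * D.bar (D.kap i) := by
  rw [kap_eq]; split_ifs
  · rw [D.bar_bar]; exact D.lam_comm a
  · simp [bar_one']

theorem kap_mul_bar {n : ℕ} (i : Idx n) : D.kap i * D.bar (D.kap i) = 1 := by
  rw [kap_eq]; split_ifs
  · rw [D.bar_bar]; exact D.bar_lam_mul
  · simp [bar_one']

theorem bar_mul_kap {n : ℕ} (i : Idx n) : D.bar (D.kap i) * D.kap i = 1 := by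
  rw [← D.kap_comm]; exact D.kap_mul_bar i

theorem kap_neg {n : ℕ} (i : Idx n) :
    D.kap (Idx.neg i) = D.bar D.lam * D.bar (D.kap i) := by
  rcases i with ⟨p, _ | _⟩ <;> simp [kap_eq, Idx.neg, bar_one', D.bar_bar, D.bar_lam_mul]

theorem bkap_neg {n : ℕ} (i : Idx n) :
    D.bar (D.kap (Idx.neg i)) = D.lam * D.kap i := by
  rw [kap_neg, D.bar_mul, D.bar_bar, D.bar_bar, D.kap_comm]

theorem lpow_eq {n : ℕ} (i j : Idx n) :
    D.lpow ((Idx.eps j - Idx.eps i) / 2) = D.kap i * D.bar (D.kap j) := by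
  rcases i with ⟨p, _ | _⟩ <;> rcases j with ⟨q, _ | _⟩ <;>
    simp [kap_eq, lpow, Idx.eps, bar_one', D.bar_bar, D.bar_lam_mul]

theorem kap_congr {n : ℕ} {i j : Idx n} (h : i.2 = j.2) : D.kap i = D.kap j := by
  simp [kap_eq, h]

/-- Abstract Steinberg-type relations. -/
structure St {m : ℕ} {Q : Type*} [Group Q] (S : Idx m → Idx m → A → Q)
    (L : Idx m → A → Q) : Prop where
  r0 : ∀ i j c, i.1 ≠ j.1 →
    S i j c = S (Idx.neg j) (Idx.neg i) (-(D.kap i * D.bar (D.kap j) * D.bar c))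
  addS : ∀ i j a b, i.1 ≠ j.1 → S i j (a + b) = S i j a * S i j b
  addL : ∀ i, ∀ a ∈ D.Lambda, ∀ b ∈ D.Lambda, L i (a + b) = L i a * L i b
  r2a : ∀ i j h k a b, i.1 ≠ j.1 → h.1 ≠ k.1 → h ≠ j → k ≠ Idx.neg j → h ≠ Idx.neg i → k ≠ i →
    Commute (S i j a) (S h k b)
  r2b : ∀ h k i a, ∀ g ∈ D.Lambda, h.1 ≠ k.1 → k ≠ i → h ≠ Idx.neg i →
    Commute (S h k a) (L i g)
  r2c : ∀ i k, ∀ g ∈ D.Lambda, ∀ d ∈ D.Lambda, k ≠ Idx.neg i → Commute (L i g) (L k d)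
  r3 : ∀ i j k a b, i.1 ≠ j.1 → j.1 ≠ k.1 → i.1 ≠ k.1 →
    S i j a * S j k b = S i k (a * b) * S j k b * S i j a
  r4 : ∀ i j a b, i.1 ≠ j.1 →
    S i j a * S j (Idx.neg i) b =
      L i (D.bar (D.kap i) * (a * b) - D.lam * D.bar (D.bar (D.kap i) * (a * b))) *
        S j (Idx.neg i) b * S i j a
  r5 : ∀ k i c, ∀ g ∈ D.Lambda, k.1 ≠ i.1 →
    S k i c * L i g = S k (Idx.neg i) (D.kap i * (c * g)) * L k (c * g * D.bar c) * L i g * S k i c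

theorem sms {m : ℕ} (i j k l : Idx m) (a b : A) :
    Matrix.single i j a * Matrix.single k l b = if j = k then Matrix.single i l (a * b) else 0 := by
  split_ifs with h
  · subst h; simp
  · exact Matrix.single_mul_single_of_ne _ _ _ _ h _

theorem single_sub' {m : ℕ} (i j : Idx m) (a b : A) :
    Matrix.single i j (a - b) = Matrix.single i j a - Matrix.single i j b := by
  rw [sub_eq_add_neg, Matrix.single_add, stdBasisMatrix_neg', sub_eq_add_neg]

theorem TS_val {m : ℕ} {i j : Idx m} (h : i.1 ≠ j.1) (c : A) :
    (D.TS i j c).val = 1 + Matrix.single i j c -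
      Matrix.single (Idx.neg j) (Idx.neg i) (D.kap i * D.bar (D.kap j) * D.bar c) := by
  have : i ≠ j := fun e => h (by rw [e])
  simp only [TS, this, dif_neg, not_false_eq_true, Xmat, lpow_eq]
  abel

/-- Normalised long root elements. -/
def TG {m : ℕ} (i : Idx m) (g : A) : GLn A m := D.TL i (D.kap i * g)

theorem TG_val {m : ℕ} (i : Idx m) (g : A) :
    (D.TG i g).val = 1 + Matrix.single i (Idx.neg i) (D.kap i * g) := rfl

theorem neg_fst {m : ℕ} (i : Idx m) : (Idx.neg i).1 = i.1 := rfl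

theorem T_r0 {m : ℕ} (i j : Idx m) (c : A) (h : i.1 ≠ j.1) :
    D.TS i j c = D.TS (Idx.neg j) (Idx.neg i) (-(D.kap i * D.bar (D.kap j) * D.bar c)) := by
  apply Units.ext
  rw [TS_val _ h, TS_val _ (by simpa [neg_fst] using h.symm)]
  simp only [Idx.neg_neg, map_neg, D.bar_mul, D.bar_bar, D.kap_neg, mul_neg, ← D.lam_comm (D.kap i),
    stdBasisMatrix_neg', sub_neg_eq_add]
  have e : D.bar D.lam * D.bar (D.kap j) * (D.lam * D.kap i) * (c * (D.kap j * D.bar (D.kap i)))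
      = c := by
    calc _ = D.bar (D.kap j) * (D.bar D.lam * D.lam) * (D.kap i * c) * (D.kap j * D.bar (D.kap i)) := by
          rw [D.blam_comm]; simp only [mul_assoc]
      _ = D.bar (D.kap j) * D.kap j * (c * (D.kap i * D.bar (D.kap i))) := by
          rw [D.bar_lam_mul, mul_one, D.kap_comm i c, ← mul_assoc, mul_assoc _ _ (D.kap j),
            ← D.kap_comm j]; simp only [mul_assoc]
      _ = c := by rw [D.bar_mul_kap, D.kap_mul_bar]; simp
  rw [e]; abel

theorem T_addS {m : ℕ} (i j : Idx m) (a b : A) (h : i.1 ≠ j.1) :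
    D.TS i j (a + b) = D.TS i j a * D.TS i j b := by
  apply Units.ext
  have h1 : j ≠ i := fun e => h (by rw [e])
  have h2 : Idx.neg i ≠ i := Idx.neg_ne i
  have h3 : j ≠ Idx.neg j := (Idx.neg_ne j).symm
  have h4 : Idx.neg i ≠ Idx.neg j := fun e => h1 (Idx.neg_injective e).symm
  rw [Units.val_mul, TS_val _ h, TS_val _ h, TS_val _ h]
  simp only [mul_add, add_mul, mul_sub, sub_mul, sms, h1, h2, h3, h4, if_false, map_add,
    Matrix.single_add, one_mul, mul_one]
  abel

theorem T_addL {m : ℕ} (i : Idx m) (a b : A) :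
    D.TG i (a + b) = D.TG i a * D.TG i b := by
  apply Units.ext
  rw [Units.val_mul, TG_val, TG_val, TG_val]
  simp only [mul_add, add_mul, sms, Idx.neg_ne, if_false,
    Matrix.single_add, one_mul, mul_one]
  abel

theorem T_r2a {m : ℕ} (i j h k : Idx m) (a b : A) (h1 : i.1 ≠ j.1) (h2 : h.1 ≠ k.1)
    (h3 : h ≠ j) (h4 : k ≠ Idx.neg j) (h5 : h ≠ Idx.neg i) (h6 : k ≠ i) :
    Commute (D.TS i j a) (D.TS h k b) := by
  apply Units.ext
  have e1 : j ≠ Idx.neg k := fun e => h4 (by rw [e, Idx.neg_neg])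
  have e2 : Idx.neg i ≠ Idx.neg k := fun e => h6 (Idx.neg_injective e).symm
  have e3 : Idx.neg h ≠ i := fun e => h5 (by rw [← e, Idx.neg_neg])
  have e4 : Idx.neg h ≠ Idx.neg j := fun e => h3 (Idx.neg_injective e)
  rw [Units.val_mul, Units.val_mul, TS_val _ h1, TS_val _ h2]
  simp only [mul_add, add_mul, mul_sub, sub_mul, sms, h3.symm, h4, h5.symm, h6, e1, e2, e3, e4,
    if_false, one_mul, mul_one]
  abel

theorem T_r2b {m : ℕ} (h k i : Idx m) (a g : A) (h1 : h.1 ≠ k.1) (h2 : k ≠ i)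
    (h3 : h ≠ Idx.neg i) : Commute (D.TS h k a) (D.TG i g) := by
  apply Units.ext
  have e1 : Idx.neg h ≠ i := fun e => h3 (by rw [← e, Idx.neg_neg])
  have e2 : Idx.neg i ≠ Idx.neg k := fun e => h2 (Idx.neg_injective e).symm
  rw [Units.val_mul, Units.val_mul, TS_val _ h1, TG_val]
  simp only [mul_add, add_mul, mul_sub, sub_mul, sms, h2, h3.symm, e1, e2,
    if_false, one_mul, mul_one]
  abel

theorem T_r2c {m : ℕ} (i k : Idx m) (g d : A) (h1 : k ≠ Idx.neg i) :
    Commute (D.TG i g) (D.TG k d) := by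
  apply Units.ext
  have e1 : Idx.neg k ≠ i := fun e => h1 (by rw [← e, Idx.neg_neg])
  rw [Units.val_mul, Units.val_mul, TG_val, TG_val]
  simp only [mul_add, add_mul, sms, h1.symm, e1, if_false, one_mul, mul_one]
  abel

theorem ne_of_fst {m : ℕ} {i j : Idx m} (h : i.1 ≠ j.1) : i ≠ j := fun e => h (by rw [e])

theorem T_r3 {m : ℕ} (i j k : Idx m) (a b : A) (h1 : i.1 ≠ j.1) (h2 : j.1 ≠ k.1)
    (h3 : i.1 ≠ k.1) :
    D.TS i j a * D.TS j k b = D.TS i k (a * b) * D.TS j k b * D.TS i j a := by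
  apply Units.ext
  have key : D.kap j * D.bar (D.kap k) * D.bar b * (D.kap i * D.bar (D.kap j) * D.bar a) =
      D.kap i * D.bar (D.kap k) * (D.bar b * D.bar a) := by
    calc _ = D.kap j * D.bar (D.kap j) * (D.bar (D.kap k) * (D.bar b * D.kap i)) * D.bar a := by
          rw [mul_assoc (D.kap j) (D.bar (D.kap j)), D.bkap_comm j]; simp only [mul_assoc]
      _ = _ := by
          rw [D.kap_mul_bar, one_mul, ← D.kap_comm, ← mul_assoc, ← D.kap_comm i]
          simp only [mul_assoc]
  simp only [Units.val_mul, TS_val _ h1, TS_val _ h2, TS_val _ h3]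
  have f : ∀ x y : Idx m, x.1 ≠ y.1 → (x = y) = False := fun x y h => eq_false (ne_of_fst h)
  simp only [mul_add, add_mul, mul_sub, sub_mul, sms, one_mul, mul_one, ite_true, ite_false,
    f _ _ h1, f _ _ h2, f _ _ h3, f _ _ h1.symm, f _ _ h2.symm, f _ _ h3.symm,
    f (Idx.neg i) j h1, f (Idx.neg j) k h2, f (Idx.neg i) k h3,
    f (Idx.neg j) i h1.symm, f (Idx.neg k) j h2.symm, f (Idx.neg k) i h3.symm,
    f i (Idx.neg j) h1, f j (Idx.neg k) h2, f i (Idx.neg k) h3,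
    f j (Idx.neg i) h1.symm, f k (Idx.neg j) h2.symm, f k (Idx.neg i) h3.symm,
    f (Idx.neg i) (Idx.neg j) h1, f (Idx.neg j) (Idx.neg k) h2, f (Idx.neg i) (Idx.neg k) h3,
    f (Idx.neg j) (Idx.neg i) h1.symm, f (Idx.neg k) (Idx.neg j) h2.symm,
    f (Idx.neg k) (Idx.neg i) h3.symm,
    Idx.neg_ne, (Idx.neg_ne _).symm, key, D.bar_mul]
  abel

theorem T_r4 {m : ℕ} (i j : Idx m) (a b : A) (h1 : i.1 ≠ j.1) :
    D.TS i j a * D.TS j (Idx.neg i) b =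
      D.TG i (D.bar (D.kap i) * (a * b) - D.lam * D.bar (D.bar (D.kap i) * (a * b))) *
        D.TS j (Idx.neg i) b * D.TS i j a := by
  apply Units.ext
  have h2 : j.1 ≠ (Idx.neg i).1 := h1.symm
  have key : D.kap i * (D.bar (D.kap i) * (a * b) - D.lam * D.bar (D.bar (D.kap i) * (a * b))) =
      a * b - D.kap j * (D.lam * D.kap i) * D.bar b * (D.kap i * D.bar (D.kap j) * D.bar a) := by
    rw [mul_sub, ← mul_assoc, D.kap_mul_bar, one_mul, D.bar_mul, D.bar_bar, D.bar_mul]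
    congr 1
    symm
    calc _ = D.kap j * D.bar (D.kap j) * (D.lam * D.kap i * (D.bar b * D.kap i)) * D.bar a := by
          rw [mul_assoc (D.kap j) (D.bar (D.kap j)), D.bkap_comm j]; simp only [mul_assoc]
      _ = _ := by
          rw [D.kap_mul_bar, one_mul, ← D.kap_comm i (D.bar b),
            ← D.kap_comm i (D.bar b * D.bar a), D.lam_comm (D.kap i)]
          simp only [mul_assoc]
  have f : ∀ x y : Idx m, x.1 ≠ y.1 → (x = y) = False := fun x y h => eq_false (ne_of_fst h)
  simp only [Units.val_mul, TS_val _ h1, TS_val _ h2, TG_val]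
  simp only [key, D.bkap_neg]
  simp only [mul_add, add_mul, mul_sub, sub_mul, sms, one_mul, mul_one, ite_true, ite_false,
    single_sub', Idx.neg_neg,
    f _ _ h1, f _ _ h1.symm,
    f (Idx.neg i) j h1, f (Idx.neg j) i h1.symm, f i (Idx.neg j) h1, f j (Idx.neg i) h1.symm,
    f (Idx.neg i) (Idx.neg j) h1, f (Idx.neg j) (Idx.neg i) h1.symm,
    Idx.neg_ne, (Idx.neg_ne _).symm]
  abel

theorem T_r5 {m : ℕ} (k i : Idx m) (c g : A) (hg : g ∈ D.Lambda) (h1 : k.1 ≠ i.1) :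
    D.TS k i c * D.TG i g =
      D.TS k (Idx.neg i) (D.kap i * (c * g)) * D.TG k (c * g * D.bar c) * D.TG i g * D.TS k i c := by
  apply Units.ext
  have h2 : k.1 ≠ (Idx.neg i).1 := h1
  have hb : D.lam * D.bar g = -g := by
    have := D.lambdaMax_mem g hg
    exact (neg_eq_iff_eq_neg.mpr this).symm
  have f : ∀ x y : Idx m, x.1 ≠ y.1 → (x = y) = False := fun x y h => eq_false (ne_of_fst h)
  have k1 : D.kap k * (D.lam * D.kap i) * D.bar (D.kap i * (c * g)) = -(D.kap k * (g * D.bar c)) := by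
    rw [D.bar_mul, D.bar_mul, ← D.bkap_comm]
    calc _ = D.kap k * D.lam * (D.kap i * D.bar (D.kap i)) * (D.bar g * D.bar c) := by
          simp only [mul_assoc]
      _ = D.kap k * (D.lam * D.bar g * D.bar c) := by rw [D.kap_mul_bar]; simp only [mul_assoc, mul_one]
      _ = _ := by rw [hb]; simp
  have k2 : D.kap i * g * (D.kap k * D.bar (D.kap i) * D.bar c) = D.kap k * (g * D.bar c) := by
    calc _ = D.kap i * (g * D.bar (D.kap i)) * D.kap k * D.bar c := by
          rw [← D.bkap_comm i (D.kap k)]; simp only [mul_assoc]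
      _ = D.kap i * D.bar (D.kap i) * (g * D.kap k) * D.bar c := by
          rw [← D.bkap_comm i g]; simp only [mul_assoc]
      _ = _ := by rw [D.kap_mul_bar, ← D.kap_comm]; simp only [mul_assoc, one_mul]
  have k3 : c * (D.kap i * g) = D.kap i * (c * g) := by
    rw [← mul_assoc, ← D.kap_comm, mul_assoc]
  have k4 : D.kap i * (c * g) * (D.kap k * D.bar (D.kap i) * D.bar c) =
      D.kap k * (c * g * D.bar c) := by
    rw [← k3, mul_assoc, k2, ← mul_assoc c, ← D.kap_comm]; simp only [mul_assoc]
  simp only [Units.val_mul, TS_val _ h1, TS_val _ h2, TG_val]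
  simp only [D.bkap_neg]
  simp only [k1]
  simp only [mul_add, add_mul, mul_sub, sub_mul, sms, one_mul, mul_one, ite_true, ite_false,
    Idx.neg_neg, stdBasisMatrix_neg',
    f _ _ h1, f _ _ h1.symm,
    f (Idx.neg k) i h1, f (Idx.neg i) k h1.symm, f k (Idx.neg i) h1, f i (Idx.neg k) h1.symm,
    f (Idx.neg k) (Idx.neg i) h1, f (Idx.neg i) (Idx.neg k) h1.symm,
    Idx.neg_ne, (Idx.neg_ne _).symm, k2, k3, k4, zero_mul, mul_zero, neg_mul, mul_neg]
  abel

end FormRingData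

namespace FormRingData

variable {A : Type*} [Ring A] {D : FormRingData A}

/-- The elements of symmetrised level are trivial in `Q`. -/
structure Kill {m : ℕ} {Q : Type*} [Group Q] (S : Idx m → Idx m → A → Q)
    (L : Idx m → A → Q) (FI FJ : FormIdeal D) : Prop where
  kS : ∀ i j, i.1 ≠ j.1 → ∀ c ∈ symI FI.I FJ.I, S i j c = 1
  kL : ∀ i, ∀ g ∈ D.symG FI.I FI.Gamma FJ.I FJ.Gamma, L i g = 1

theorem symI_comm (I J : AddSubgroup A) : symI I J = symI J I := sup_comm _ _

theorem symG_comm (I Γ J Δ : AddSubgroup A) : D.symG I Γ J Δ = D.symG J Δ I Γ := by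
  rw [symG, symG, symI_comm, sup_assoc, sup_assoc, sup_comm (D.conjPar J Γ)]

theorem mem_symI_left {I J : AddSubgroup A} {a b : A} (ha : a ∈ I) (hb : b ∈ J) :
    a * b ∈ symI I J :=
  AddSubgroup.mem_sup_left (AddSubgroup.subset_closure ⟨a, ha, b, hb, rfl⟩)

theorem mem_symI_right {I J : AddSubgroup A} {a b : A} (ha : a ∈ I) (hb : b ∈ J) :
    b * a ∈ symI I J :=
  AddSubgroup.mem_sup_right (AddSubgroup.subset_closure ⟨b, hb, a, ha, rfl⟩)

theorem symI_mul_left (FI FJ : FormIdeal D) (c : A) {x : A} (hx : x ∈ symI FI.I FJ.I) :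
    c * x ∈ symI FI.I FJ.I := by
  have h : symI FI.I FJ.I ≤ (symI FI.I FJ.I).comap (AddMonoidHom.mulLeft c) := by
    refine sup_le ?_ ?_
    · refine (AddSubgroup.closure_le _).mpr ?_
      rintro _ ⟨a, ha, b, hb, rfl⟩
      show c * (a * b) ∈ symI FI.I FJ.I
      rw [← mul_assoc]; exact mem_symI_left (FI.mul_mem_left _ _ ha) hb
    · refine (AddSubgroup.closure_le _).mpr ?_
      rintro _ ⟨a, ha, b, hb, rfl⟩
      show c * (a * b) ∈ symI FI.I FJ.I
      rw [← mul_assoc]; exact mem_symI_right hb (FJ.mul_mem_left _ _ ha)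
  exact h hx

theorem Kill.symm {m : ℕ} {Q : Type*} [Group Q] {S : Idx m → Idx m → A → Q}
    {L : Idx m → A → Q} {FI FJ : FormIdeal D} (h : Kill S L FI FJ) : Kill S L FJ FI where
  kS := by rw [symI_comm]; exact h.kS
  kL := by rw [symG_comm]; exact h.kL

theorem comm_of_kill {Q : Type*} [Group Q] {x y z : Q} (h : x * y = z * y * x) (hz : z = 1) :
    Commute x y := by
  rw [hz, one_mul] at h; exact h

/-- the group-theoretic key lemma -/
theorem key_comm {Q : Type*} [Group Q] {x y z x' : Q} (h1 : Commute z y)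
    (h2 : z * x = x' * x * z) (h3 : Commute x' x) (h4 : Commute x' y) : Commute z ⁅x, y⁆ := by
  have hc : Commute x' ⁅x, y⁆ := by
    rw [commutatorElement_def]
    exact ((h3.mul_right h4).mul_right h3.inv_right).mul_right h4.inv_right
  have e1 : z * x * z⁻¹ = x' * x := by rw [h2]; group
  have e2 : z * y * z⁻¹ = y := by rw [h1.eq]; group
  have : z * ⁅x, y⁆ * z⁻¹ = ⁅x, y⁆ := by
    calc z * ⁅x, y⁆ * z⁻¹ = ⁅z * x * z⁻¹, z * y * z⁻¹⁆ := by
          simp only [commutatorElement_def]; group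
      _ = ⁅x' * x, y⁆ := by rw [e1, e2]
      _ = x' * ⁅x, y⁆ * (y * x'⁻¹) * y⁻¹ := by simp only [commutatorElement_def]; group
      _ = x' * ⁅x, y⁆ * (x'⁻¹ * y) * y⁻¹ := by rw [h4.inv_left.eq]
      _ = ⁅x, y⁆ := by rw [hc.eq]; group
  exact mul_inv_eq_iff_eq_mul.mp this

section
variable {m : ℕ} {Q : Type*} [Group Q] {S : Idx m → Idx m → A → Q}
    {L : Idx m → A → Q} {FI FJ : FormIdeal D} (hs : D.St S L)

theorem FormIdeal.r0_mem (F : FormIdeal D) (i j : Idx m) {b : A} (hb : b ∈ F.I) :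
    -(D.kap i * D.bar (D.kap j) * D.bar b) ∈ F.I :=
  neg_mem (F.mul_mem_left _ _ (F.bar_mem _ hb))

include hs

theorem cSS1 (hk : Kill S L FI FJ) {i j k : Idx m} {a b : A} (hab : a * b ∈ symI FI.I FJ.I)
    (h1 : i.1 ≠ j.1) (h2 : j.1 ≠ k.1) (h3 : i ≠ k) : Commute (S i j a) (S j k b) := by
  by_cases h : i.1 = k.1
  · have hk' : k = Idx.neg i := by
      rcases i with ⟨p, s⟩; rcases k with ⟨q, t⟩
      simp only [Idx.neg] at h ⊢; subst h
      cases s <;> cases t <;> simp_all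
    subst hk'
    refine comm_of_kill (hs.r4 i j a b h1) (hk.kL _ _ ?_)
    refine AddSubgroup.mem_sup_left (AddSubgroup.mem_sup_left (AddSubgroup.subset_closure ?_))
    exact Or.inl ⟨_, symI_mul_left FI FJ _ hab, rfl⟩
  · exact comm_of_kill (hs.r3 i j k a b h1 h2 h) (hk.kS _ _ h _ hab)

theorem cSS (hk : Kill S L FI FJ) {i j h k : Idx m} {a b : A} (ha : a ∈ FI.I) (hb : b ∈ FJ.I)
    (h1 : i.1 ≠ j.1) (h2 : h.1 ≠ k.1) (n1 : ¬ (h = j ∧ k = i))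
    (n2 : ¬ (h = Idx.neg i ∧ k = Idx.neg j)) : Commute (S i j a) (S h k b) := by
  by_cases c1 : h = j
  · subst c1
    exact cSS1 hs hk (mem_symI_left ha hb) h1 h2 (fun e => n1 ⟨rfl, e.symm⟩)
  by_cases c2 : k = Idx.neg j
  · rw [hs.r0 h k b h2]
    subst c2
    rw [Idx.neg_neg]
    refine cSS1 hs hk (mem_symI_left ha (FormIdeal.r0_mem FJ _ _ hb)) h1 h2.symm ?_
    intro e; exact n2 ⟨by rw [e, Idx.neg_neg], rfl⟩
  by_cases c3 : h = Idx.neg i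
  · rw [hs.r0 h k b h2]
    subst c3
    rw [Idx.neg_neg]
    refine (cSS1 hs hk (i := Idx.neg k) (j := i) (k := j)
      (mem_symI_right ha (FormIdeal.r0_mem FJ _ _ hb)) h2.symm h1 ?_).symm
    intro e; exact c2 (by rw [← e, Idx.neg_neg])
  by_cases c4 : k = i
  · subst c4
    exact (cSS1 hs hk (mem_symI_right ha hb) h2 h1 c1).symm
  exact hs.r2a _ _ _ _ _ _ h1 h2 c1 c2 c3 c4

theorem cSL (hk : Kill S L FI FJ) {h k i : Idx m} {a g : A} (ha : a ∈ FI.I) (hg : g ∈ FJ.Gamma)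
    (h1 : h.1 ≠ k.1) : Commute (S h k a) (L i g) := by
  have main : ∀ (h i : Idx m) (a : A), a ∈ FI.I → h.1 ≠ i.1 → Commute (S h i a) (L i g) := by
    intro h i a ha h1
    refine comm_of_kill (hs.r5 h i a g (FJ.gamma_le_Lambda hg) h1) ?_
    rw [hk.kS h (Idx.neg i) h1 _ (symI_mul_left FI FJ _ (mem_symI_left ha (FJ.gamma_le_I hg))),
      hk.kL h _ (AddSubgroup.mem_sup_right (AddSubgroup.subset_closure ⟨a, ha, g, hg, rfl⟩)),
      one_mul]
  by_cases c1 : k = i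
  · subst c1; exact main _ _ _ ha h1
  by_cases c2 : h = Idx.neg i
  · rw [hs.r0 h k a h1]
    subst c2
    rw [Idx.neg_neg]
    exact main _ _ _ (FormIdeal.r0_mem FI _ _ ha) h1.symm
  exact hs.r2b _ _ _ _ _ (FJ.gamma_le_Lambda hg) h1 c1 c2

/-- short commutators, first adjacency case -/
theorem cent1 (hk : Kill S L FI FJ) {i j k : Idx m} {a b : A} (ha : a ∈ FI.I) (hb : b ∈ FJ.I)
    (c : A) (h1 : i.1 ≠ j.1) (h2 : k.1 ≠ i.1) (h3 : k.1 ≠ j.1) :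
    Commute (S k j c) ⁅S i j a, S j i b⁆ := by
  have : Commute (S k j c) ⁅S j i b, S i j a⁆ := by
    refine key_comm (x' := S k i (c * b)) ?_ ?_ ?_ ?_
    · exact hs.r2a _ _ _ _ _ _ h3 h1 (ne_of_fst h1) (Idx.neg_ne j).symm
        (ne_of_fst (j := Idx.neg k) h2.symm) (ne_of_fst h3.symm)
    · exact hs.r3 k j i c b h3 h1.symm h2
    · exact hs.r2a _ _ _ _ _ _ h2 h1.symm (ne_of_fst h1.symm) (Idx.neg_ne i).symm
        (ne_of_fst (j := Idx.neg k) h3.symm) (ne_of_fst h2.symm)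
    · refine cSS1 hs hk ?_ h2 h1 (ne_of_fst h3)
      exact mem_symI_right ha (FJ.mul_mem_left _ _ hb)
  have := this.inv_right
  rwa [commutatorElement_inv] at this

theorem cent2 (hk : Kill S L FI FJ) {i j k : Idx m} {a b : A} (ha : a ∈ FI.I) (hb : b ∈ FJ.I)
    (c : A) (h1 : i.1 ≠ j.1) (h2 : k.1 ≠ i.1) (h3 : k.1 ≠ j.1) :
    Commute (S k i c) ⁅S i j a, S j i b⁆ := by
  have := (cent1 hs hk.symm hb ha c h1.symm h3 h2).inv_right
  rwa [commutatorElement_inv] at this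

omit hs in
theorem eq_or_neg {i j : Idx m} (h : i.1 = j.1) : i = j ∨ i = Idx.neg j := by
  rcases i with ⟨p, s⟩; rcases j with ⟨q, t⟩
  simp only [Idx.neg] at h ⊢; subst h
  cases s <;> cases t <;> simp

theorem cent3 (hk : Kill S L FI FJ) {i j k l : Idx m} {a b : A} (ha : a ∈ FI.I) (hb : b ∈ FJ.I)
    (c : A) (h1 : i.1 ≠ j.1) (h2 : k.1 ≠ i.1) (h3 : k.1 ≠ j.1) (h4 : l.1 = i.1 ∨ l.1 = j.1) :
    Commute (S k l c) ⁅S i j a, S j i b⁆ := by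
  rcases h4 with h4 | h4
  · rcases eq_or_neg h4 with rfl | rfl
    · exact cent2 hs hk ha hb c h1 h2 h3
    · rw [hs.r0 i j a h1, hs.r0 j i b h1.symm]
      exact cent1 hs hk (FormIdeal.r0_mem FI _ _ ha) (FormIdeal.r0_mem FJ _ _ hb) c h1.symm h3 h2
  · rcases eq_or_neg h4 with rfl | rfl
    · exact cent1 hs hk ha hb c h1 h2 h3
    · rw [hs.r0 i j a h1, hs.r0 j i b h1.symm]
      exact cent2 hs hk (FormIdeal.r0_mem FI _ _ ha) (FormIdeal.r0_mem FJ _ _ hb) c h1.symm h3 h2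

theorem cent4 (hk : Kill S L FI FJ) {i j k l : Idx m} {a b : A} (ha : a ∈ FI.I) (hb : b ∈ FJ.I)
    (c : A) (h1 : i.1 ≠ j.1) (h2 : k.1 ≠ i.1) (h3 : k.1 ≠ j.1) (h4 : l.1 = i.1 ∨ l.1 = j.1) :
    Commute (S l k c) ⁅S i j a, S j i b⁆ := by
  have : l.1 ≠ k.1 := by rcases h4 with h4 | h4 <;> rw [h4] <;> [exact h2.symm; exact h3.symm]
  rw [hs.r0 l k c this]
  exact cent3 hs hk ha hb _ h1 h2 h3 h4

omit hs in
theorem comm_commutator {x y z : Q} (h1 : Commute z x) (h2 : Commute z y) : Commute z ⁅x, y⁆ := by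
  rw [commutatorElement_def]
  exact ((h1.mul_right h2).mul_right h1.inv_right).mul_right h2.inv_right

omit hs in
theorem exists_third (hm : 3 ≤ m) (p q : Fin m) : ∃ k : Fin m, k ≠ p ∧ k ≠ q := by
  by_contra hcon
  push Not at hcon
  have : (Finset.univ : Finset (Fin m)) ⊆ {p, q} := by
    intro x _
    by_cases hx : x = p
    · simp [hx]
    · simp [hcon x hx]
  have h1 := Finset.card_le_card this
  have h2 := Finset.card_le_two (a := p) (b := q)
  simp at h1
  omega

/-- a long root element is a product of elements adjacent to it -/
theorem comm_long {h k : Idx m} (hkk : h.1 ≠ k.1) {g : A} (hg : g ∈ D.Lambda) {z : Q}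
    (c1 : ∀ c, Commute (S h k c) z) (c2 : ∀ c, Commute (S h (Idx.neg k) c) z)
    (c3 : Commute (L k g) z) : Commute (L h g) z := by
  have e := hs.r5 h k 1 g hg hkk
  rw [bar_one', one_mul, mul_one] at e
  have e' : L h g = (S h (Idx.neg k) (D.kap k * g))⁻¹ * (S h k 1 * L k g * (S h k 1)⁻¹ * (L k g)⁻¹) := by
    rw [e]; group
  rw [e']
  exact (c2 _).inv_left.mul_left ((((c1 1).mul_left c3).mul_left (c1 1).inv_left).mul_left c3.inv_left)

theorem cent_short_S (hm : 3 ≤ m) (hk : Kill S L FI FJ) {i j : Idx m} {a b : A} (ha : a ∈ FI.I)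
    (hb : b ∈ FJ.I) (h1 : i.1 ≠ j.1) (h l : Idx m) (c : A) (h2 : h.1 ≠ l.1) :
    Commute (S h l c) ⁅S i j a, S j i b⁆ := by
  by_cases ch : h.1 = i.1 ∨ h.1 = j.1
  · by_cases cl : l.1 = i.1 ∨ l.1 = j.1
    · obtain ⟨k, k1, k2⟩ := exists_third hm i.1 j.1
      have kh : h.1 ≠ k := by rcases ch with e | e <;> rw [e] <;> [exact k1.symm; exact k2.symm]
      have kl : k ≠ l.1 := by rcases cl with e | e <;> rw [e] <;> [exact k1; exact k2]
      have e := hs.r3 h (k, true) l c 1 kh kl h2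
      have e' : S h l c = S h (k, true) c * S (k, true) l 1 * (S h (k, true) c)⁻¹ *
          (S (k, true) l 1)⁻¹ := by
        rw [e, mul_one]; group
      have d1 := cent4 hs hk ha hb c h1 (k := (k, true)) k1 k2 ch
      have d2 := cent3 hs hk ha hb 1 h1 (k := (k, true)) k1 k2 cl
      rw [e']
      exact ((d1.mul_left d2).mul_left d1.inv_left).mul_left d2.inv_left
    · push Not at cl
      exact cent4 hs hk ha hb c h1 cl.1 cl.2 ch
  · push Not at ch
    by_cases cl : l.1 = i.1 ∨ l.1 = j.1
    · exact cent3 hs hk ha hb c h1 ch.1 ch.2 cl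
    · push Not at cl
      refine comm_commutator ?_ ?_
      · exact hs.r2a _ _ _ _ _ _ h2 h1 (ne_of_fst cl.1.symm) (ne_of_fst (j := Idx.neg l) cl.2.symm)
          (ne_of_fst (j := Idx.neg h) ch.1.symm) (ne_of_fst ch.2.symm)
      · exact hs.r2a _ _ _ _ _ _ h2 h1.symm (ne_of_fst cl.2.symm) (ne_of_fst (j := Idx.neg l) cl.1.symm)
          (ne_of_fst (j := Idx.neg h) ch.2.symm) (ne_of_fst ch.1.symm)

theorem cent_short_L (hm : 3 ≤ m) (hk : Kill S L FI FJ) {i j : Idx m} {a b : A} (ha : a ∈ FI.I)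
    (hb : b ∈ FJ.I) (h1 : i.1 ≠ j.1) (h : Idx m) (g : A) (hg : g ∈ D.Lambda) :
    Commute (L h g) ⁅S i j a, S j i b⁆ := by
  have out : ∀ h : Idx m, h.1 ≠ i.1 → h.1 ≠ j.1 → Commute (L h g) ⁅S i j a, S j i b⁆ := by
    intro h e1 e2
    refine comm_commutator (Commute.symm ?_) (Commute.symm ?_)
    · exact hs.r2b _ _ _ _ _ hg h1 (ne_of_fst e2.symm) (ne_of_fst (j := Idx.neg h) e1.symm)
    · exact hs.r2b _ _ _ _ _ hg h1.symm (ne_of_fst e1.symm) (ne_of_fst (j := Idx.neg h) e2.symm)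
  by_cases ch : h.1 = i.1 ∨ h.1 = j.1
  · obtain ⟨k, k1, k2⟩ := exists_third hm i.1 j.1
    have kh : h.1 ≠ k := by rcases ch with e | e <;> rw [e] <;> [exact k1.symm; exact k2.symm]
    exact comm_long hs (k := (k, true)) kh hg (fun c => cent_short_S hs hm hk ha hb h1 _ _ _ kh)
      (fun c => cent_short_S hs hm hk ha hb h1 _ _ _ kh) (out _ k1 k2)
  · push Not at ch
    exact out _ ch.1 ch.2

theorem cent_long1 (hk : Kill S L FI FJ) {i k : Idx m} {g d : A} (hg : g ∈ FI.Gamma)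
    (hd : d ∈ FJ.Gamma) (c : A) (h1 : k.1 ≠ i.1) :
    Commute (S k i c) ⁅L i g, L (Idx.neg i) d⁆ := by
  have hg' := FI.gamma_le_Lambda hg
  have hd' := FJ.gamma_le_Lambda hd
  have hg2 : c * g * D.bar c ∈ D.Lambda := D.lambda_conj _ _ hg'
  refine key_comm (x' := S k (Idx.neg i) (D.kap i * (c * g)) * L k (c * g * D.bar c)) ?_ ?_ ?_ ?_
  · exact hs.r2b _ _ _ _ _ hd' h1 (Idx.neg_ne i).symm (by rw [Idx.neg_neg]; exact ne_of_fst h1)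
  · exact hs.r5 k i c g hg' h1
  · refine Commute.mul_left ?_ ?_
    · exact hs.r2b _ _ _ _ _ hg' h1 (Idx.neg_ne i) (ne_of_fst (j := Idx.neg i) h1)
    · exact hs.r2c _ _ _ hg2 _ hg' (ne_of_fst (j := Idx.neg k) h1.symm)
  · refine Commute.mul_left ?_ ?_
    · exact cSL hs hk (FI.mul_mem_left _ _ (FI.mul_mem_left _ _ (FI.gamma_le_I hg))) hd h1
    · exact hs.r2c _ _ _ hg2 _ hd' (ne_of_fst (i := Idx.neg i) (j := Idx.neg k) h1.symm)

theorem cent_long2 (hk : Kill S L FI FJ) {i k l : Idx m} {g d : A} (hg : g ∈ FI.Gamma)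
    (hd : d ∈ FJ.Gamma) (c : A) (h1 : k.1 ≠ i.1) (h2 : l.1 = i.1) :
    Commute (S k l c) ⁅L i g, L (Idx.neg i) d⁆ := by
  rcases eq_or_neg h2 with rfl | rfl
  · exact cent_long1 hs hk hg hd c h1
  · have := (cent_long1 hs hk.symm (i := Idx.neg i) hd hg c h1).inv_right
    rwa [Idx.neg_neg, commutatorElement_inv] at this

theorem cent_long_S (hk : Kill S L FI FJ) {i : Idx m} {g d : A} (hg : g ∈ FI.Gamma)
    (hd : d ∈ FJ.Gamma) (h l : Idx m) (c : A) (h1 : h.1 ≠ l.1) :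
    Commute (S h l c) ⁅L i g, L (Idx.neg i) d⁆ := by
  by_cases e1 : l.1 = i.1
  · exact cent_long2 hs hk hg hd c (by rw [← e1]; exact h1) e1
  by_cases e2 : h.1 = i.1
  · rw [hs.r0 h l c h1]
    exact cent_long2 hs hk hg hd _ e1 e2
  refine comm_commutator ?_ ?_
  · exact hs.r2b _ _ _ _ _ (FI.gamma_le_Lambda hg) h1 (ne_of_fst e1) (ne_of_fst (j := Idx.neg i) e2)
  · exact hs.r2b _ _ _ _ _ (FJ.gamma_le_Lambda hd) h1 (ne_of_fst (j := Idx.neg i) e1)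
      (ne_of_fst (j := Idx.neg (Idx.neg i)) e2)

theorem cent_long_L (hm : 3 ≤ m) (hk : Kill S L FI FJ) {i : Idx m} {g d : A} (hg : g ∈ FI.Gamma)
    (hd : d ∈ FJ.Gamma) (h : Idx m) (r : A) (hr : r ∈ D.Lambda) :
    Commute (L h r) ⁅L i g, L (Idx.neg i) d⁆ := by
  have out : ∀ h : Idx m, h.1 ≠ i.1 → Commute (L h r) ⁅L i g, L (Idx.neg i) d⁆ := by
    intro h e1
    refine comm_commutator ?_ ?_
    · exact hs.r2c _ _ _ hr _ (FI.gamma_le_Lambda hg) (ne_of_fst (j := Idx.neg h) e1.symm)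
    · exact hs.r2c _ _ _ hr _ (FJ.gamma_le_Lambda hd)
        (ne_of_fst (i := Idx.neg i) (j := Idx.neg h) e1.symm)
  by_cases ch : h.1 = i.1
  · obtain ⟨k, k1, k2⟩ := exists_third hm i.1 i.1
    have kh : h.1 ≠ k := by rw [ch]; exact k1.symm
    exact comm_long hs (k := (k, true)) kh hr (fun c => cent_long_S hs hk hg hd _ _ _ kh)
      (fun c => cent_long_S hs hk hg hd _ _ _ kh) (out _ k1)
  · exact out _ ch

/-! Weyl elements -/

omit hs in
theorem conj_mul_eq {u x y : Q} (h : u * x = y * u) : u * x * u⁻¹ = y := by rw [h]; group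

theorem S_neg {i j : Idx m} (h : i.1 ≠ j.1) (a : A) : S i j (-a) = (S i j a)⁻¹ := by
  have z : S i j 0 = 1 := by
    have := hs.addS i j 0 0 h
    rw [add_zero] at this
    exact left_eq_mul.mp this
  have := hs.addS i j (-a) a h
  rw [neg_add_cancel, z] at this
  exact eq_inv_of_mul_eq_one_left this.symm

theorem L_neg (i : Idx m) {a : A} (ha : a ∈ D.Lambda) : L i (-a) = (L i a)⁻¹ := by
  have z : L i 0 = 1 := by
    have := hs.addL i 0 (zero_mem _) 0 (zero_mem _)
    rw [add_zero] at this
    exact left_eq_mul.mp this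
  have := hs.addL i (-a) (neg_mem ha) a ha
  rw [neg_add_cancel, z] at this
  exact eq_inv_of_mul_eq_one_left this.symm

theorem weyl_row {i j k : Idx m} (hij : i.1 ≠ j.1) (hik : i.1 ≠ k.1) (hkj : k.1 ≠ j.1) (a : A) :
    S i k 1 * S k i (-1) * S i k 1 * S i j a = S k j (-a) * (S i k 1 * S k i (-1) * S i k 1) := by
  have c1 : Commute (S i k 1) (S i j a) :=
    hs.r2a _ _ _ _ _ _ hik hij (ne_of_fst hik) (ne_of_fst (j := Idx.neg k) hkj.symm)
      (Idx.neg_ne i).symm (ne_of_fst hij.symm)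
  have e2 := hs.r3 k i j (-1) a hik.symm hij hkj
  have e3 := hs.r3 i k j 1 (-a) hik hkj hij
  rw [neg_one_mul] at e2
  rw [one_mul, S_neg hs hij] at e3
  have c4 : Commute (S i j a) (S k j (-a)) :=
    hs.r2a _ _ _ _ _ _ hij hkj (ne_of_fst hkj) (Idx.neg_ne j).symm
      (ne_of_fst (j := Idx.neg i) hik.symm) (ne_of_fst hij.symm)
  calc _ = S i k 1 * S k i (-1) * (S i k 1 * S i j a) := by group
    _ = S i k 1 * (S k i (-1) * S i j a) * S i k 1 := by rw [c1.eq]; group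
    _ = (S i k 1 * S k j (-a)) * S i j a * S k i (-1) * S i k 1 := by rw [e2]; group
    _ = (S i j a)⁻¹ * S k j (-a) * (S i k 1 * S i j a) * S k i (-1) * S i k 1 := by rw [e3]; group
    _ = (S i j a)⁻¹ * (S k j (-a) * S i j a) * S i k 1 * S k i (-1) * S i k 1 := by rw [c1.eq]; group
    _ = _ := by rw [← c4.eq]; group

theorem weyl_col {i j k : Idx m} (hij : i.1 ≠ j.1) (hik : i.1 ≠ k.1) (hkj : k.1 ≠ j.1) (a : A) :
    S i k 1 * S k i (-1) * S i k 1 * S j i a = S j k (-a) * (S i k 1 * S k i (-1) * S i k 1) := by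
  have e1 := hs.r3 j i k a 1 hij.symm hik hkj.symm
  rw [mul_one] at e1
  have e2 := hs.r3 j k i (-a) (-1) hkj.symm hik.symm hij.symm
  rw [mul_neg_one, _root_.neg_neg] at e2
  have e1' : S i k 1 * S j i a = S j k (-a) * S j i a * S i k 1 := by
    rw [S_neg hs hkj.symm]
    calc _ = (S j k a)⁻¹ * (S j k a * S i k 1 * S j i a) := by group
      _ = _ := by rw [← e1]; group
  have e2' : S k i (-1) * S j k (-a) = (S j i a)⁻¹ * S j k (-a) * S k i (-1) := by
    calc _ = (S j i a)⁻¹ * (S j i a * S k i (-1) * S j k (-a)) := by group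
      _ = _ := by rw [← e2]; group
  have c1 : Commute (S k i (-1)) (S j i a) :=
    hs.r2a _ _ _ _ _ _ hik.symm hij.symm (ne_of_fst hij.symm) (Idx.neg_ne i).symm
      (ne_of_fst (j := Idx.neg k) hkj.symm) (ne_of_fst hik)
  have c2 : Commute (S j k (-a)) (S j i a) :=
    hs.r2a _ _ _ _ _ _ hkj.symm hij.symm (ne_of_fst hkj.symm) (ne_of_fst (j := Idx.neg k) hik)
      (Idx.neg_ne j).symm (ne_of_fst hij)
  have c3 : Commute (S i k 1) (S j k (-a)) :=
    hs.r2a _ _ _ _ _ _ hik hkj.symm (ne_of_fst hkj.symm) (Idx.neg_ne k).symm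
      (ne_of_fst (j := Idx.neg i) hij.symm) (ne_of_fst hik.symm)
  calc _ = S i k 1 * S k i (-1) * (S i k 1 * S j i a) := by group
    _ = S i k 1 * (S k i (-1) * S j k (-a)) * S j i a * S i k 1 := by rw [e1']; group
    _ = S i k 1 * (S j i a)⁻¹ * S j k (-a) * (S k i (-1) * S j i a) * S i k 1 := by rw [e2']; group
    _ = S i k 1 * (S j i a)⁻¹ * (S j k (-a) * S j i a) * S k i (-1) * S i k 1 := by rw [c1.eq]; group
    _ = (S i k 1 * S j k (-a)) * S k i (-1) * S i k 1 := by rw [c2.eq]; group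
    _ = _ := by rw [c3.eq]; group

theorem weyl_core {i k : Idx m} (hik : i.1 ≠ k.1) {g : A} (hg : g ∈ D.Lambda) {e : A}
    (he : e = 1 ∨ e = -1) :
    S i k e * S k i (-e) * L i g = L k g * (S i k e * S k i (-e)) := by
  have hb : D.lam * D.bar g = -g := by
    have := D.lambdaMax_mem g hg
    exact (neg_eq_iff_eq_neg.mpr this).symm
  have hee : e * e = 1 := by rcases he with rfl | rfl <;> simp
  have hbe : D.bar e = e := by rcases he with rfl | rfl <;> simp [bar_one']
  have hec : ∀ x : A, e * x = x * e := by rcases he with rfl | rfl <;> simp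
  have n1 : e * g * e = g := by rw [hec, mul_assoc, hee, mul_one]
  have r1 := hs.r5 k i (-e) g hg hik.symm
  have r2 := hs.r5 i k e g hg hik
  rw [map_neg, hbe, neg_mul, neg_mul_neg, n1, mul_neg, S_neg hs (j := Idx.neg i) hik.symm] at r1
  rw [hbe, n1] at r2
  -- the two short factors coincide
  have s0 : S i (Idx.neg k) (D.kap k * (e * g)) = S k (Idx.neg i) (D.kap i * (e * g)) := by
    rw [hs.r0 i (Idx.neg k) _ hik, Idx.neg_neg, D.bkap_neg]
    congr 1
    rw [D.bar_mul, D.bar_mul, hbe, ← D.bkap_comm]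
    calc _ = -(D.kap i * D.lam * (D.kap k * D.bar (D.kap k)) * (D.bar g * e)) := by
          simp only [mul_assoc]
      _ = -(D.kap i * (D.lam * D.bar g) * e) := by
          rw [D.kap_mul_bar, mul_one]; simp only [mul_assoc]
      _ = _ := by rw [hb, hec]; simp [mul_assoc]
  have r3 := hs.r4 i k e (-(D.kap i * (e * g))) hik
  have v : D.bar (D.kap i) * (e * -(D.kap i * (e * g))) = -g := by
    rw [mul_neg, mul_neg, ← mul_assoc e, ← D.kap_comm, mul_assoc, ← mul_assoc e, hee, one_mul,
      ← mul_assoc, D.bar_mul_kap, one_mul]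
  have v2 : -g - D.lam * D.bar (-g) = -(g + g) := by
    rw [map_neg, mul_neg, hb]; abel
  rw [v, v2, L_neg hs _ (add_mem hg hg), hs.addL _ _ hg _ hg, S_neg hs (j := Idx.neg i) hik.symm] at r3
  rw [s0] at r2
  have c1 : Commute (S i k e) (L i g) :=
    hs.r2b _ _ _ _ _ hg hik (ne_of_fst hik.symm) (Idx.neg_ne i).symm
  have c2 : Commute (L i g) (L k g) :=
    hs.r2c _ _ _ hg _ hg (ne_of_fst (j := Idx.neg i) hik.symm)
  calc _ = S i k e * (S k i (-e) * L i g) := by group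
    _ = (S i k e * (S k (Idx.neg i) (D.kap i * (e * g)))⁻¹) * L k g * L i g * S k i (-e) := by
        rw [r1]; group
    _ = (L i g * L i g)⁻¹ * (S k (Idx.neg i) (D.kap i * (e * g)))⁻¹ * (S i k e * L k g) * L i g
          * S k i (-e) := by rw [r3]; group
    _ = (L i g * L i g)⁻¹ * L i g * L k g * (S i k e * L i g) * S k i (-e) := by rw [r2]; group
    _ = (L i g)⁻¹ * (L k g * L i g) * S i k e * S k i (-e) := by rw [c1.eq]; group
    _ = _ := by rw [← c2.eq]; group

theorem weyl_long1 {i k : Idx m} (hik : i.1 ≠ k.1) {g : A} (hg : g ∈ D.Lambda) :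
    S i k 1 * S k i (-1) * S i k 1 * L i g = L k g * (S i k 1 * S k i (-1) * S i k 1) := by
  have c1 : Commute (S i k 1) (L i g) :=
    hs.r2b _ _ _ _ _ hg hik (ne_of_fst hik.symm) (Idx.neg_ne i).symm
  rw [mul_assoc, c1.eq, ← mul_assoc, weyl_core hs hik hg (Or.inl rfl)]; group

theorem weyl_long2 {i k : Idx m} (hik : i.1 ≠ k.1) (hsg : i.2 = k.2) {g : A}
    (hg : g ∈ D.Lambda) :
    S i k 1 * S k i (-1) * S i k 1 * L (Idx.neg i) g =
      L (Idx.neg k) g * (S i k 1 * S k i (-1) * S i k 1) := by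
  have u : S i k 1 = S (Idx.neg k) (Idx.neg i) (-1) := by
    rw [hs.r0 i k 1 hik, bar_one', mul_one, D.kap_congr hsg, D.kap_mul_bar]
  have v : S k i (-1) = S (Idx.neg i) (Idx.neg k) 1 := by
    rw [hs.r0 k i (-1) hik.symm, map_neg, bar_one', D.kap_congr hsg, D.kap_mul_bar]; simp
  have c := weyl_core hs (i := Idx.neg i) (k := Idx.neg k) hik hg (Or.inl rfl)
  rw [← v, ← u] at c
  have c1 : Commute (S i k 1) (L (Idx.neg k) g) := by
    rw [u]
    exact hs.r2b _ _ _ _ _ hg hik.symm (ne_of_fst (i := Idx.neg i) (j := Idx.neg k) hik)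
      (Idx.neg_ne _).symm
  calc _ = S i k 1 * (S k i (-1) * S i k 1 * L (Idx.neg i) g) := by group
    _ = _ := by rw [c, ← mul_assoc, c1.eq]; group

/-- generators of level `(I,Γ)` in `Q` -/
def gens (S : Idx m → Idx m → A → Q) (L : Idx m → A → Q) (I Γ : AddSubgroup A) : Set Q :=
  {x | ∃ i j, i.1 ≠ j.1 ∧ ∃ a ∈ I, x = S i j a} ∪ {x | ∃ i, ∃ g ∈ Γ, x = L i g}

end

/-- commutators of opposite generators avoiding the index `p` -/
def goods {m : ℕ} {Q : Type*} [Group Q] (S : Idx m → Idx m → A → Q) (L : Idx m → A → Q)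
    (FI FJ : FormIdeal D) (p : Fin m) : Set Q :=
  {x | ∃ i j, i.1 ≠ j.1 ∧ i.1 ≠ p ∧ j.1 ≠ p ∧ ∃ a ∈ FI.I, ∃ b ∈ FJ.I, x = ⁅S i j a, S j i b⁆} ∪
  {x | ∃ i, i.1 ≠ p ∧ ∃ g ∈ FI.Gamma, ∃ d ∈ FJ.Gamma, x = ⁅L i g, L (Idx.neg i) d⁆}

theorem conj_commutator {Q : Type*} [Group Q] {w x y x' y' : Q} (h1 : w * x = x' * w)
    (h2 : w * y = y' * w) (h3 : Commute w ⁅x, y⁆) : ⁅x, y⁆ = ⁅x', y'⁆ := by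
  have e1 : w * x * w⁻¹ = x' := conj_mul_eq h1
  have e2 : w * y * w⁻¹ = y' := conj_mul_eq h2
  calc ⁅x, y⁆ = w * ⁅x, y⁆ * w⁻¹ := by rw [h3.eq]; group
    _ = ⁅w * x * w⁻¹, w * y * w⁻¹⁆ := by simp only [commutatorElement_def]; group
    _ = _ := by rw [e1, e2]

theorem commutator_closure_le {Q : Type*} [Group Q] {X Y : Set Q} {C : Subgroup Q} [C.Normal]
    (h : ∀ x ∈ X, ∀ y ∈ Y, ⁅x, y⁆ ∈ C) :
    ⁅Subgroup.closure X, Subgroup.closure Y⁆ ≤ C := by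
  have key : ∀ x y : Q, ⁅x, y⁆ ∈ C ↔ Commute (x : Q ⧸ C) (y : Q ⧸ C) := by
    intro x y
    rw [← commutatorElement_eq_one_iff_commute, ← QuotientGroup.eq_one_iff]
    rfl
  rw [Subgroup.commutator_le]
  intro x hx y hy
  rw [key]
  have hX : Subgroup.closure X ≤
      (Subgroup.centralizer ((QuotientGroup.mk' C) '' Y)).comap (QuotientGroup.mk' C) := by
    rw [Subgroup.closure_le]
    rintro x hx
    rw [SetLike.mem_coe, Subgroup.mem_comap, Subgroup.mem_centralizer_iff]
    rintro _ ⟨y, hy, rfl⟩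
    exact ((key x y).mp (h x hx y hy)).symm
  have hY : Subgroup.closure Y ≤
      (Subgroup.centralizer {(x : Q ⧸ C)}).comap (QuotientGroup.mk' C) := by
    rw [Subgroup.closure_le]
    rintro y hy
    rw [SetLike.mem_coe, Subgroup.mem_comap, Subgroup.mem_centralizer_iff]
    rintro _ rfl
    have := hX hx
    rw [Subgroup.mem_comap, Subgroup.mem_centralizer_iff] at this
    exact (this _ ⟨y, hy, rfl⟩).symm
  have := hY hy
  rw [Subgroup.mem_comap, Subgroup.mem_centralizer_iff] at this
  exact this _ rfl

theorem abstract_main {m : ℕ} (hm : 3 ≤ m) {Q : Type*} [Group Q] {S : Idx m → Idx m → A → Q}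
    {L : Idx m → A → Q} {FI FJ : FormIdeal D} (hs : D.St S L) (hk : Kill S L FI FJ)
    (hgen : Subgroup.closure (gens S L ⊤ D.Lambda) = ⊤) (p : Fin m) :
    ⁅Subgroup.closure (gens S L FI.I FI.Gamma), Subgroup.closure (gens S L FJ.I FJ.Gamma)⁆ ≤
      Subgroup.closure (goods S L FI FJ p) := by
  have cen : ∀ z : Q, (∀ i j c, i.1 ≠ j.1 → Commute (S i j c) z) →
      (∀ i, ∀ g ∈ D.Lambda, Commute (L i g) z) → ∀ q : Q, Commute q z := by
    intro z h1 h2 q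
    have : (⊤ : Subgroup Q) ≤ Subgroup.centralizer {z} := by
      rw [← hgen, Subgroup.closure_le]
      rintro _ (⟨i, j, hij, a, -, rfl⟩ | ⟨i, g, hg, rfl⟩)
      · rw [SetLike.mem_coe, Subgroup.mem_centralizer_iff]
        rintro _ rfl; exact (h1 i j a hij).symm
      · rw [SetLike.mem_coe, Subgroup.mem_centralizer_iff]
        rintro _ rfl; exact (h2 i g hg).symm
    have h := this (Subgroup.mem_top q)
    rw [Subgroup.mem_centralizer_iff] at h
    exact (h z rfl).symm
  have cenS : ∀ i j a b, i.1 ≠ j.1 → a ∈ FI.I → b ∈ FJ.I → ∀ q : Q, Commute q ⁅S i j a, S j i b⁆ :=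
    fun i j a b hij ha hb => cen _ (fun _ _ _ h => cent_short_S hs hm hk ha hb hij _ _ _ h)
      (fun _ _ h => cent_short_L hs hm hk ha hb hij _ _ h)
  have cenL : ∀ i g d, g ∈ FI.Gamma → d ∈ FJ.Gamma → ∀ q : Q, Commute q ⁅L i g, L (Idx.neg i) d⁆ :=
    fun i g d hg hd => cen _ (fun _ _ _ h => cent_long_S hs hk hg hd _ _ _ h)
      (fun _ _ h => cent_long_L hs hm hk hg hd _ _ h)
  have hcenter : Subgroup.closure (goods S L FI FJ p) ≤ Subgroup.center Q := by
    rw [Subgroup.closure_le]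
    rintro _ (⟨i, j, hij, -, -, a, ha, b, hb, rfl⟩ | ⟨i, -, g, hg, d, hd, rfl⟩)
    · exact Subgroup.mem_center_iff.mpr (fun q => cenS i j a b hij ha hb q)
    · exact Subgroup.mem_center_iff.mpr (fun q => cenL i g d hg hd q)
  have : (Subgroup.closure (goods S L FI FJ p)).Normal := by
    constructor
    intro x hx q
    have := Subgroup.mem_center_iff.mp (hcenter hx) q
    rw [this, mul_inv_cancel_right]; exact hx
  have one : ∀ {x y : Q}, Commute x y → ⁅x, y⁆ ∈ Subgroup.closure (goods S L FI FJ p) := by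
    intro x y h
    rw [commutatorElement_eq_one_iff_commute.mpr h]; exact one_mem _
  have short : ∀ i j a b, i.1 ≠ j.1 → a ∈ FI.I → b ∈ FJ.I →
      ⁅S i j a, S j i b⁆ ∈ Subgroup.closure (goods S L FI FJ p) := by
    intro i j a b hij ha hb
    by_cases hi : i.1 = p
    · obtain ⟨k, k1, k2⟩ := exists_third hm p j.1
      have hik : i.1 ≠ k := by rw [hi]; exact k1.symm
      have hj : j.1 ≠ p := by rw [← hi]; exact hij.symm
      rw [conj_commutator (weyl_row hs (k := (k, true)) hij hik k2 a)
        (weyl_col hs (k := (k, true)) hij hik k2 b) (cenS i j a b hij ha hb _)]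
      exact Subgroup.subset_closure
        (Or.inl ⟨(k, true), j, k2, k1, hj, _, neg_mem ha, _, neg_mem hb, rfl⟩)
    · by_cases hj : j.1 = p
      · obtain ⟨k, k1, k2⟩ := exists_third hm p i.1
        have hjk : j.1 ≠ k := by rw [hj]; exact k1.symm
        rw [conj_commutator (weyl_col hs (k := (k, true)) hij.symm hjk k2 a)
          (weyl_row hs (k := (k, true)) hij.symm hjk k2 b) (cenS i j a b hij ha hb _)]
        exact Subgroup.subset_closure
          (Or.inl ⟨i, (k, true), k2.symm, hi, k1, _, neg_mem ha, _, neg_mem hb, rfl⟩)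
      · exact Subgroup.subset_closure (Or.inl ⟨i, j, hij, hi, hj, _, ha, _, hb, rfl⟩)
  have long : ∀ i g d, g ∈ FI.Gamma → d ∈ FJ.Gamma →
      ⁅L i g, L (Idx.neg i) d⁆ ∈ Subgroup.closure (goods S L FI FJ p) := by
    intro i g d hg hd
    by_cases hi : i.1 = p
    · obtain ⟨k, k1, -⟩ := exists_third hm p p
      have hik : i.1 ≠ k := by rw [hi]; exact k1.symm
      rw [conj_commutator (weyl_long1 hs (k := (k, i.2)) hik (FI.gamma_le_Lambda hg))
        (weyl_long2 hs (k := (k, i.2)) hik rfl (FJ.gamma_le_Lambda hd)) (cenL i g d hg hd _)]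
      exact Subgroup.subset_closure (Or.inr ⟨(k, i.2), k1, _, hg, _, hd, rfl⟩)
    · exact Subgroup.subset_closure (Or.inr ⟨i, hi, _, hg, _, hd, rfl⟩)
  apply commutator_closure_le
  rintro _ (⟨i, j, hij, a, ha, rfl⟩ | ⟨i, g, hg, rfl⟩) _ (⟨h, k, hhk, b, hb, rfl⟩ | ⟨h, d, hd, rfl⟩)
  · by_cases c1 : h = j ∧ k = i
    · obtain ⟨rfl, rfl⟩ := c1
      exact short _ _ _ _ hij ha hb
    by_cases c2 : h = Idx.neg i ∧ k = Idx.neg j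
    · obtain ⟨rfl, rfl⟩ := c2
      rw [hs.r0 _ _ b hhk, Idx.neg_neg, Idx.neg_neg]
      exact short _ _ _ _ hij ha (FormIdeal.r0_mem FJ _ _ hb)
    exact one (cSS hs hk ha hb hij hhk c1 c2)
  · exact one (cSL hs hk ha hd hij)
  · exact one (cSL hs hk.symm hb hg hhk).symm
  · by_cases c1 : h = Idx.neg i
    · subst c1; exact long _ _ _ hg hd
    · exact one (hs.r2c _ _ _ (FI.gamma_le_Lambda hg) _ (FJ.gamma_le_Lambda hd) c1)

end FormRingData

namespace FormRingData

variable {A : Type*} [Ring A] (D : FormRingData A)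

theorem ne_iff_fst {m : ℕ} {i j : Idx m} : (i ≠ j ∧ i ≠ Idx.neg j) ↔ i.1 ≠ j.1 := by
  constructor
  · rintro ⟨h1, h2⟩ h
    rcases eq_or_neg h with e | e
    · exact h1 e
    · exact h2 e
  · intro h; exact ⟨ne_of_fst h, ne_of_fst (j := Idx.neg j) h⟩

theorem transvGen_short {m : ℕ} {I Γ : AddSubgroup A} {i j : Idx m} (h : i.1 ≠ j.1) {c : A}
    (hc : c ∈ I) : D.TS i j c ∈ D.transvGen m I Γ :=
  Or.inl ⟨i, j, (ne_iff_fst.mpr h).1, (ne_iff_fst.mpr h).2, c, hc, rfl⟩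

theorem transvGen_long {m : ℕ} {I Γ : AddSubgroup A} (i : Idx m) {g : A}
    (hg : g ∈ Γ) : D.TG i g ∈ D.transvGen m I Γ :=
  Or.inr ⟨i, g, hg, rfl⟩

theorem TS_mem {m : ℕ} {i j : Idx m} (h : i.1 ≠ j.1) (c : A) : D.TS i j c ∈ D.EUmax m :=
  Subgroup.subset_closure (D.transvGen_short h (AddSubgroup.mem_top c))

theorem TG_mem {m : ℕ} (i : Idx m) {g : A} (hg : g ∈ D.Lambda) : D.TG i g ∈ D.EUmax m :=
  Subgroup.subset_closure (D.transvGen_long i hg)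

open Classical in
/-- lift to `EU` with junk value `1` -/
noncomputable def lft {m : ℕ} (x : GLn A m) : D.EUmax m :=
  if h : x ∈ D.EUmax m then ⟨x, h⟩ else 1

theorem lft_eq {m : ℕ} {x : GLn A m} (h : x ∈ D.EUmax m) : D.lft x = ⟨x, h⟩ := by
  simp [lft, h]

theorem lft_mul {m : ℕ} {x y : GLn A m} (hx : x ∈ D.EUmax m) (hy : y ∈ D.EUmax m) :
    D.lft (x * y) = D.lft x * D.lft y := by
  rw [D.lft_eq hx, D.lft_eq hy, D.lft_eq (mul_mem hx hy)]; rfl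

theorem St_lft {m : ℕ} {Q : Type*} [Group Q] (π : D.EUmax m →* Q) :
    D.St (fun i j c => π (D.lft (D.TS i j c))) (fun i g => π (D.lft (D.TG i g))) := by
  have com : ∀ {x y : GLn A m}, x ∈ D.EUmax m → y ∈ D.EUmax m → Commute x y →
      Commute (π (D.lft x)) (π (D.lft y)) := by
    intro x y hx hy h
    show _ * _ = _ * _
    rw [← map_mul, ← map_mul, ← D.lft_mul hx hy, ← D.lft_mul hy hx, h.eq]
  constructor
  · intro i j c h; rw [D.T_r0 i j c h]
  · intro i j a b h
    rw [D.T_addS i j a b h, D.lft_mul (D.TS_mem h _) (D.TS_mem h _), map_mul]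
  · intro i a ha b hb
    rw [D.T_addL i a b, D.lft_mul (D.TG_mem i ha) (D.TG_mem i hb), map_mul]
  · intro i j h k a b h1 h2 h3 h4 h5 h6
    exact com (D.TS_mem h1 _) (D.TS_mem h2 _) (D.T_r2a i j h k a b h1 h2 h3 h4 h5 h6)
  · intro h k i a g hg h1 h2 h3
    exact com (D.TS_mem h1 _) (D.TG_mem i hg) (D.T_r2b h k i a g h1 h2 h3)
  · intro i k g hg d hd h
    exact com (D.TG_mem i hg) (D.TG_mem k hd) (D.T_r2c i k g d h)
  · intro i j k a b h1 h2 h3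
    have m1 := D.TS_mem h1 a
    have m2 := D.TS_mem h2 b
    have m3 := D.TS_mem h3 (a * b)
    simp only [← map_mul]
    rw [← D.lft_mul m1 m2, D.T_r3 i j k a b h1 h2 h3, D.lft_mul (mul_mem m3 m2) m1,
      D.lft_mul m3 m2]
  · intro i j a b h1
    have m1 := D.TS_mem h1 a
    have m2 := D.TS_mem (i := j) (j := Idx.neg i) h1.symm b
    have m3 := D.TG_mem i (D.lambdaMin_mem (D.bar (D.kap i) * (a * b)))
    simp only [← map_mul]
    rw [← D.lft_mul m1 m2, D.T_r4 i j a b h1, D.lft_mul (mul_mem m3 m2) m1, D.lft_mul m3 m2]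
  · intro k i c g hg h1
    have m1 := D.TS_mem h1 c
    have m2 := D.TG_mem i hg
    have m3 := D.TS_mem (i := k) (j := Idx.neg i) h1 (D.kap i * (c * g))
    have m4 := D.TG_mem k (D.lambda_conj c g hg)
    simp only [← map_mul]
    rw [← D.lft_mul m1 m2, D.T_r5 k i c g hg h1, D.lft_mul (mul_mem (mul_mem m3 m4) m2) m1,
      D.lft_mul (mul_mem m3 m4) m2, D.lft_mul m3 m4]

theorem EU_conj {m : ℕ} {I Γ : AddSubgroup A} {g x : GLn A m} (hg : g ∈ D.EUmax m)
    (hx : x ∈ D.EU m I Γ) : g * x * g⁻¹ ∈ D.EU m I Γ := by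
  have : D.EU m I Γ ≤ (D.EU m I Γ).comap (MulAut.conj g).toMonoidHom := by
    conv_lhs => rw [EU]
    rw [Subgroup.closure_le]
    rintro _ ⟨h, hh, t, ht, rfl⟩
    refine Subgroup.subset_closure ⟨g * h, mul_mem hg hh, t, ht, ?_⟩
    simp [mul_assoc]
  exact this hx

theorem gen_mem_EU {m : ℕ} {I Γ : AddSubgroup A} {x : GLn A m} (hx : x ∈ D.transvGen m I Γ) :
    x ∈ D.EU m I Γ :=
  Subgroup.subset_closure ⟨1, one_mem _, x, hx, by simp⟩

/-- inclusion of the index set -/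
def inc {n : ℕ} (i : Idx n) : Idx (n + 1) := (i.1.castSucc, i.2)

theorem idxSum_inl {n : ℕ} (i : Idx n) : idxSumEquiv n (Sum.inl i) = inc i := by
  rcases i with ⟨p, s⟩
  simp [idxSumEquiv, inc, Prod.ext_iff, Fin.ext_iff]

theorem embMat_one_add {n : ℕ} (M : Matrix (Idx n) (Idx n) A) :
    embMat n (1 + M) = 1 + (Matrix.fromBlocks M 0 0 (0 : Matrix Bool Bool A)).submatrix
      (idxSumEquiv n).symm (idxSumEquiv n).symm := by
  rw [← embMat_one n, embMat, embMat]
  have h : Matrix.fromBlocks (1 + M) 0 0 (1 : Matrix Bool Bool A) =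
      Matrix.fromBlocks 1 0 0 1 + Matrix.fromBlocks M 0 0 0 := by
    simp only [Matrix.fromBlocks_add, add_zero]
  rw [h]; rfl

theorem block_single {n : ℕ} (i j : Idx n) (c : A) :
    (Matrix.fromBlocks (Matrix.single i j c) 0 0 (0 : Matrix Bool Bool A)).submatrix
      (idxSumEquiv n).symm (idxSumEquiv n).symm = Matrix.single (inc i) (inc j) c := by
  ext x y
  obtain ⟨x, rfl⟩ := (idxSumEquiv n).surjective x
  obtain ⟨y, rfl⟩ := (idxSumEquiv n).surjective y
  rw [← idxSum_inl, ← idxSum_inl]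
  rcases x with x | x <;> rcases y with y | y <;>
    simp [Matrix.single_apply, (idxSumEquiv n).injective.eq_iff]

theorem inc_fst {n : ℕ} {i j : Idx n} (h : i.1 ≠ j.1) : (inc i).1 ≠ (inc j).1 := by
  simpa [inc] using h

theorem inc_neg {n : ℕ} (i : Idx n) : inc (Idx.neg i) = Idx.neg (inc i) := rfl

theorem kap_inc {n : ℕ} (i : Idx n) : D.kap (inc i) = D.kap i := by simp [kap_eq, inc]

theorem emb_TS {n : ℕ} {i j : Idx n} (h : i.1 ≠ j.1) (c : A) :
    embGL A n (D.TS i j c) = D.TS (inc i) (inc j) c := by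
  apply Units.ext
  show embMat n (D.TS i j c).val = _
  rw [D.TS_val h, D.TS_val (inc_fst h), add_sub_assoc, embMat_one_add, sub_eq_add_neg,
    ← stdBasisMatrix_neg']
  have := Matrix.fromBlocks_add (Matrix.single i j c) 0 0 (0 : Matrix Bool Bool A)
    (Matrix.single (Idx.neg j) (Idx.neg i) (-(D.kap i * D.bar (D.kap j) * D.bar c))) 0 0 0
  simp only [add_zero] at this
  rw [← this, Matrix.submatrix_add, Pi.add_apply, Pi.add_apply, block_single, block_single, inc_neg, inc_neg,
    stdBasisMatrix_neg', kap_inc, kap_inc]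
  abel

theorem emb_TG {n : ℕ} (i : Idx n) (g : A) :
    embGL A n (D.TG i g) = D.TG (inc i) g := by
  apply Units.ext
  show embMat n (D.TG i g).val = _
  rw [D.TG_val, D.TG_val, embMat_one_add, block_single, inc_neg, kap_inc]

theorem exists_inc {n : ℕ} {i : Idx (n + 1)} (h : i.1 ≠ Fin.last n) : ∃ j : Idx n, inc j = i := by
  obtain ⟨j, hj⟩ := Fin.exists_castSucc_eq.mpr h
  exact ⟨(j, i.2), Prod.ext hj rfl⟩

end FormRingData

open FormRingData

/-- Theorem 9: surjective stability for the quotients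
`[FU(2n,I,Γ),FU(2n,J,Δ)]/EU(2n,(I,Γ)∘(J,Δ))`. -/
theorem statement6 {A : Type*} [Ring A] (D : FormRingData A) (n : ℕ) (hn : 3 ≤ n)
    (FI FJ : FormIdeal D) :
    ∀ y ∈ ⁅D.FU (n + 1) FI.I FI.Gamma, D.FU (n + 1) FJ.I FJ.Gamma⁆,
      ∃ x ∈ ⁅D.FU n FI.I FI.Gamma, D.FU n FJ.I FJ.Gamma⁆,
        y⁻¹ * embGL A n x ∈ D.EUsym (n + 1) FI.I FI.Gamma FJ.I FJ.Gamma := by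
  have hN : ((D.EUsym (n + 1) FI.I FI.Gamma FJ.I FJ.Gamma).subgroupOf (D.EUmax (n + 1))).Normal := by
    constructor
    intro x hx g
    rw [Subgroup.mem_subgroupOf] at hx ⊢
    exact D.EU_conj g.2 hx
  let E := (D.EUsym (n + 1) FI.I FI.Gamma FJ.I FJ.Gamma).subgroupOf (D.EUmax (n + 1))
  let π : D.EUmax (n + 1) →* (D.EUmax (n + 1)) ⧸ E := QuotientGroup.mk' E
  let S : Idx (n + 1) → Idx (n + 1) → A → (D.EUmax (n + 1)) ⧸ E := fun i j c => π (D.lft (D.TS i j c))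
  let L : Idx (n + 1) → A → (D.EUmax (n + 1)) ⧸ E := fun i g => π (D.lft (D.TG i g))
  have hs : D.St S L := D.St_lft π
  have kill : ∀ x : GLn A (n + 1), x ∈ D.EUmax (n + 1) →
      x ∈ D.EUsym (n + 1) FI.I FI.Gamma FJ.I FJ.Gamma → π (D.lft x) = 1 := by
    intro x hx hx'
    rw [D.lft_eq hx]
    exact (QuotientGroup.eq_one_iff _).mpr (Subgroup.mem_subgroupOf.mpr hx')
  have symG_le : D.symG FI.I FI.Gamma FJ.I FJ.Gamma ≤ D.Lambda := by
    refine sup_le (sup_le ?_ ?_) ?_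
    · refine (AddSubgroup.closure_le _).mpr ?_
      rintro _ (⟨a, -, rfl⟩ | ⟨a, -, c, hc, rfl⟩)
      · exact D.lambdaMin_mem a
      · exact D.lambda_conj _ _ hc
    · refine (AddSubgroup.closure_le _).mpr ?_
      rintro _ ⟨b, -, g, hg, rfl⟩
      exact D.lambda_conj _ _ (FI.gamma_le_Lambda hg)
    · refine (AddSubgroup.closure_le _).mpr ?_
      rintro _ ⟨b, -, g, hg, rfl⟩
      exact D.lambda_conj _ _ (FJ.gamma_le_Lambda hg)
  have hk : Kill S L FI FJ := by
    constructor
    · intro i j h c hc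
      exact kill _ (D.TS_mem h c) (D.gen_mem_EU (D.transvGen_short h hc))
    · intro i g hg
      exact kill _ (D.TG_mem i (symG_le hg)) (D.gen_mem_EU (D.transvGen_long i hg))
  have lift_gen : ∀ I Γ : AddSubgroup A, Γ ≤ D.Lambda → D.FU (n + 1) I Γ ≤
      ((Subgroup.closure (gens S L I Γ)).comap π).map (D.EUmax (n + 1)).subtype := by
    intro I Γ hΓ
    rw [FU, Subgroup.closure_le]
    rintro _ (⟨i, j, h1, h2, c, hc, rfl⟩ | ⟨i, g, hg, rfl⟩)
    · have h := ne_iff_fst.mp ⟨h1, h2⟩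
      refine ⟨⟨_, D.TS_mem h c⟩, Subgroup.subset_closure (Or.inl ⟨i, j, h, c, hc, ?_⟩), rfl⟩
      show _ = π (D.lft _)
      rw [D.lft_eq (D.TS_mem h c)]
    · refine ⟨⟨_, D.TG_mem i (hΓ hg)⟩, Subgroup.subset_closure (Or.inr ⟨i, g, hg, ?_⟩), rfl⟩
      show _ = π (D.lft _)
      rw [D.lft_eq (D.TG_mem i (hΓ hg))]
  have hgen : Subgroup.closure (gens S L ⊤ D.Lambda) = ⊤ := by
    rw [eq_top_iff]
    intro q _
    obtain ⟨x, rfl⟩ := QuotientGroup.mk'_surjective E q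
    obtain ⟨y, hy, hyx⟩ := lift_gen ⊤ D.Lambda le_rfl x.2
    have : y = x := Subtype.ext hyx
    rw [← this]; exact hy
  have main := abstract_main (by omega) hs hk hgen (Fin.last n)
  have good : Subgroup.closure (goods S L FI FJ (Fin.last n)) ≤
      (((⁅D.FU n FI.I FI.Gamma, D.FU n FJ.I FJ.Gamma⁆).map (embGL A n)).subgroupOf
        (D.EUmax (n + 1))).map π := by
    rw [Subgroup.closure_le]
    have fin : ∀ u v : GLn A n, u ∈ D.FU n FI.I FI.Gamma → v ∈ D.FU n FJ.I FJ.Gamma →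
        ∀ (hu : embGL A n u ∈ D.EUmax (n + 1)) (hv : embGL A n v ∈ D.EUmax (n + 1)),
        ⁅π (D.lft (embGL A n u)), π (D.lft (embGL A n v))⁆ ∈
          (((⁅D.FU n FI.I FI.Gamma, D.FU n FJ.I FJ.Gamma⁆).map (embGL A n)).subgroupOf
        (D.EUmax (n + 1))).map π := by
      intro u v hu' hv' hu hv
      rw [D.lft_eq hu, D.lft_eq hv, ← map_commutatorElement]
      refine Subgroup.mem_map_of_mem π (Subgroup.mem_subgroupOf.mpr ?_)
      exact ⟨⁅u, v⁆, Subgroup.commutator_mem_commutator hu' hv', map_commutatorElement _ _ _⟩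
    rintro _ (⟨i, j, hij, hi, hj, a, ha, b, hb, rfl⟩ | ⟨i, hi, g, hg, d, hd, rfl⟩)
    · obtain ⟨i, rfl⟩ := exists_inc hi
      obtain ⟨j, rfl⟩ := exists_inc hj
      have h : i.1 ≠ j.1 := fun e => hij (by simp [inc, e])
      have := fin (D.TS i j a) (D.TS j i b) (Subgroup.subset_closure (D.transvGen_short h ha))
        (Subgroup.subset_closure (D.transvGen_short h.symm hb))
        (by rw [D.emb_TS h]; exact D.TS_mem (inc_fst h) a)
        (by rw [D.emb_TS h.symm]; exact D.TS_mem (inc_fst h.symm) b)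
      rw [D.emb_TS h, D.emb_TS h.symm] at this
      exact this
    · obtain ⟨i, rfl⟩ := exists_inc hi
      have := fin (D.TG i g) (D.TG (Idx.neg i) d) (Subgroup.subset_closure (D.transvGen_long i hg))
        (Subgroup.subset_closure (D.transvGen_long _ hd))
        (by rw [D.emb_TG]; exact D.TG_mem _ (FI.gamma_le_Lambda hg))
        (by rw [D.emb_TG]; exact D.TG_mem _ (FJ.gamma_le_Lambda hd))
      rw [D.emb_TG, D.emb_TG, inc_neg] at this
      exact this
  intro y hy
  have h1 := Subgroup.commutator_mono (lift_gen _ _ FI.gamma_le_Lambda)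
    (lift_gen _ _ FJ.gamma_le_Lambda) hy
  rw [← Subgroup.map_commutator] at h1
  obtain ⟨y', hy', rfl⟩ := h1
  have h2 : π y' ∈ ⁅Subgroup.closure (gens S L FI.I FI.Gamma),
      Subgroup.closure (gens S L FJ.I FJ.Gamma)⁆ := by
    have h3 := Subgroup.mem_map_of_mem π hy'
    rw [Subgroup.map_commutator] at h3
    exact Subgroup.commutator_mono (Subgroup.map_comap_le _ _) (Subgroup.map_comap_le _ _) h3
  obtain ⟨z, hz, hzy⟩ := good (main h2)
  obtain ⟨x, hx, hxz⟩ := Subgroup.mem_subgroupOf.mp hz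
  refine ⟨x, hx, ?_⟩
  rw [hxz]
  exact Subgroup.mem_subgroupOf.mp (QuotientGroup.eq.mp hzy.symm)
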